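/- In the Melikian algebra M over a field of characteristic 5, the squaring cocycle of ad(1) (with 1 ∈ M_{−2}) satisfies Sq(1)(x_i, x_ix_j²D_i) = 2D_i and Sq(1)(x_i, x_j³D_j) = D_i for i ≠ j, while for every 1-cochain g homogeneous of degree −10 one has dg(x_i, x_ix_j²D_i) = dg(x_i, x_j³D_j) = −g(x_ix_j²); hence [Sq(1)] ≠ 0 in H²(M,M). -/

import Mathlib

open scoped BigOperators

namespace Melikian

/-- Index set for monomials in the truncated polynomial algebra
`A(2) = F[x₁,x₂]/(x₁⁵,x₂⁵)`. -/
abbrev Idx : Type := Fin 5 × Fin 5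

/-- The truncated polynomial algebra `A(2)`, as functions on monomial exponents. -/
abbrev A (F : Type*) [Field F] : Type _ := Idx → F

variable {F : Type*} [Field F]

/-- The monomial `x^b = x₁^{b₁} x₂^{b₂}`. -/
def X (b : Idx) : A F := fun a => if a = b then 1 else 0

/-- Truncated multiplication of `A(2)`. -/
def mulA (f g : A F) : A F := fun a =>
  ∑ b : Idx, ∑ c : Idx,
    if b.1.val + c.1.val = a.1.val ∧ b.2.val + c.2.val = a.2.val then f b * g c else 0

/-- Partial derivative `∂/∂x₁` on `A(2)`. -/
def d1 (f : A F) : A F := fun a =>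
  if h : a.1.val + 1 < 5 then ((a.1.val + 1 : ℕ) : F) * f (⟨a.1.val + 1, h⟩, a.2) else 0

/-- Partial derivative `∂/∂x₂` on `A(2)`. -/
def d2 (f : A F) : A F := fun a =>
  if h : a.2.val + 1 < 5 then ((a.2.val + 1 : ℕ) : F) * f (a.1, ⟨a.2.val + 1, h⟩) else 0

/-- The Witt–Jacobson algebra `W(2)` as a free `A(2)`-module with basis `D₁, D₂`:
an element `(f₁, f₂)` stands for `f₁D₁ + f₂D₂`. -/
abbrev W (F : Type*) [Field F] : Type _ := A F × A F

/-- Action of a derivation `D = f₁D₁+f₂D₂ ∈ W(2)` on `A(2)`. -/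
def Dw (D : W F) (g : A F) : A F := mulA D.1 (d1 g) + mulA D.2 (d2 g)

/-- Divergence `div(f₁D₁+f₂D₂) = D₁(f₁) + D₂(f₂)`. -/
def divW (D : W F) : A F := d1 D.1 + d2 D.2

/-- The usual bracket of `W(2)`. -/
def brW (D E : W F) : W F := (Dw D E.1 - Dw E D.1, Dw D E.2 - Dw E D.2)

/-- Multiplication of an element of `W(2)` by a truncated polynomial. -/
def smulA (f : A F) (D : W F) : W F := (mulA f D.1, mulA f D.2)

/-- The Melikian algebra `M = A(2) ⊕ W(2) ⊕ W(2)~` as an `F`-vector space. -/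
abbrev Mel (F : Type*) [Field F] : Type _ := A F × W F × W F

/-- Inclusion of `A(2)` into `M`. -/
def ιA (f : A F) : Mel F := (f, 0, 0)

/-- Inclusion of `W(2)` into `M`. -/
def ιW (D : W F) : Mel F := (0, D, 0)

/-- Inclusion of the second copy `W(2)~` into `M`, `D ↦ D̃`. -/
def ιT (D : W F) : Mel F := (0, 0, D)

/-- The Melikian bracket on `M = A(2) ⊕ W(2) ⊕ W(2)~`, defined by the rules
`[D,Ẽ] = [D,E]~ + 2 div(D) Ẽ`, `[D,f] = D(f) − 2 div(D) f`,
`[f₁D̃₁+f₂D̃₂, g₁D̃₁+g₂D̃₂] = f₁g₂ − f₂g₁`, `[f,Ẽ] = fE`,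
`[f,g] = 2(gD₂(f) − fD₂(g))D̃₁ + 2(fD₁(g) − gD₁(f))D̃₂`,
extended bilinearly and antisymmetrically (with the standard bracket on `W(2)`). -/
def brM (u v : Mel F) : Mel F :=
  ( (Dw u.2.1 v.1 - (2 : F) • mulA (divW u.2.1) v.1)
      - (Dw v.2.1 u.1 - (2 : F) • mulA (divW v.2.1) u.1)
      + (mulA u.2.2.1 v.2.2.2 - mulA u.2.2.2 v.2.2.1)
  , brW u.2.1 v.2.1 + smulA u.1 v.2.2 - smulA v.1 u.2.2
  , (brW u.2.1 v.2.2 + (2 : F) • smulA (divW u.2.1) v.2.2)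
      - (brW v.2.1 u.2.2 + (2 : F) • smulA (divW v.2.1) u.2.2)
      + ((2 : F) • (mulA v.1 (d2 u.1) - mulA u.1 (d2 v.1)),
         (2 : F) • (mulA u.1 (d1 v.1) - mulA v.1 (d1 u.1))) )

/-- `x^b D_i` as an element of `W(2)` (`i = 0` stands for `D₁`, `i = 1` for `D₂`). -/
def wOf (i : Fin 2) (b : Idx) : W F := if i = 0 then (X b, 0) else (0, X b)

/-- The element `x₁D₁ ∈ M`. -/
def x1D1 : Mel F := ιW (X (1, 0), 0)

/-- The element `x₂D₂ ∈ M`. -/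
def x2D2 : Mel F := ιW (0, X (0, 1))

/-- The element `1 ∈ A(2) ⊂ M`. -/
def oneM : Mel F := ιA (X (0, 0))

/-- The element `D_{i+1} ∈ W(2) ⊂ M`. -/
def DD (i : Fin 2) : Mel F := ιW (wOf i (0, 0))

/-- The element `D̃_{i+1} ∈ W(2)~ ⊂ M`. -/
def TT (i : Fin 2) : Mel F := ιT (wOf i (0, 0))

/-- Total degree of a monomial exponent. -/
def degA (b : Idx) : ℤ := (b.1.val : ℤ) + (b.2.val : ℤ)

/-- The degree-`d` piece `M_d` of the `ℤ`-grading of the Melikian algebra: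
`deg_M(f) = 3 deg(f) − 2` on `A(2)`, `deg_M(x^bD_i) = 3(|b|−1)` on `W(2)`, and
`deg_M(x^bD̃_i) = 3(|b|−1)+2` on `W(2)~`. -/
def Md (d : ℤ) : Submodule F (Mel F) :=
  Submodule.span F
    ( {m | ∃ b : Idx, m = ιA (X b) ∧ d = 3 * degA b - 2}
      ∪ {m | ∃ b : Idx, ∃ i : Fin 2, m = ιW (wOf i b) ∧ d = 3 * (degA b - 1)}
      ∪ {m | ∃ b : Idx, ∃ i : Fin 2, m = ιT (wOf i b) ∧ d = 3 * (degA b - 1) + 2} )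

/-- The part `M_{≥ d}` of the Melikian algebra. -/
def Mge (d : ℤ) : Submodule F (Mel F) := ⨆ e : ℤ, ⨆ _ : d ≤ e, (Md e : Submodule F (Mel F))

/-- The squaring `Sq(γ)(x,y) = Σ_{k=1}^{4} [γ^k(x), γ^{5−k}(y)] / (k!(5−k)!)`
of an operator `γ` on the Melikian algebra (characteristic 5). -/
def melSq (γ : Mel F → Mel F) (x y : Mel F) : Mel F :=
  ∑ k ∈ Finset.Icc 1 4,
    ((Nat.factorial k * Nat.factorial (5 - k) : ℕ) : F)⁻¹ • brM (γ^[k] x) (γ^[5 - k] y)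

/-- The Chevalley–Eilenberg coboundary of a linear 1-cochain of `M` with values in the
adjoint representation. -/
def cob (g : Mel F →ₗ[F] Mel F) (x y : Mel F) : Mel F :=
  brM x (g y) - brM y (g x) - g (brM x y)


/-!
`ad 1` acts on `M` by `f ↦ 2 H(f)~`, `Ẽ ↦ E` and `D ↦ 2 div D`, where `H(f) = D₁(f) D₂ − D₂(f) D₁`
is the Hamiltonian field of `f`. Since `div H(f) = 0`, it satisfies `(ad 1)³ = 0` on `A(2)` and
`(ad 1)⁴ = 0` on `W(2)`, so only the term `k = 2` of `Sq(1)(f, D)` survives and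
`Sq(1)(f, D) = −[H(f), H(div D)]`. As `H(x₁) = D₂` and `H(x₂) = −D₁`, this gives
`Sq(1)(x₁, D) = −H(D₂(div D))` and `Sq(1)(x₂, D) = H(D₁(div D))`.

Degrees in `M` start at `−3`, so for any cochain `g` and `x`, `y` of positive degree the brackets
`[x, g(y)]` and `[y, g(x)]` have no component in `M₋₃`, and the component of `dg(x, y)` there is
minus that of `g([x, y])`. But `[x₁, x₁x₂²D₁] = x₁x₂² = [x₁, x₂³D₂]`, whereas `Sq(1)` takes the
distinct values `2D₁` and `D₁` on these two pairs.
-/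

section TruncatedPolynomials

theorem mulA_comm (f g : A F) : mulA f g = mulA g f := by
  funext a
  unfold mulA
  rw [Finset.sum_comm]
  refine Finset.sum_congr rfl fun c _ => Finset.sum_congr rfl fun b _ => ?_
  rw [add_comm b.1.val, add_comm b.2.val, mul_comm]

@[simp]
theorem smul_mulA (r : F) (f g : A F) : mulA (r • f) g = r • mulA f g := by
  funext a
  simp only [mulA, Pi.smul_apply, smul_eq_mul, Finset.mul_sum, mul_ite, mul_zero, mul_assoc]

@[simp]
theorem mulA_smul (r : F) (f g : A F) : mulA f (r • g) = r • mulA f g := by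
  rw [mulA_comm, smul_mulA, mulA_comm]

@[simp]
theorem zero_mulA (g : A F) : mulA 0 g = 0 := by
  simpa using smul_mulA 0 0 g

@[simp]
theorem mulA_zero (f : A F) : mulA f 0 = 0 := by
  rw [mulA_comm, zero_mulA]

theorem X_mulA_apply (b : Idx) (g : A F) (a : Idx) :
    mulA (X b) g a =
      ∑ c : Idx, if b.1.val + c.1.val = a.1.val ∧ b.2.val + c.2.val = a.2.val then g c else 0 := by
  simp only [mulA]
  rw [Finset.sum_eq_single b (fun b' _ hb => by simp [X, hb]) (by simp)]
  simp [X]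

@[simp]
theorem one_mulA (g : A F) : mulA (X (0, 0)) g = g := by
  funext a
  simp [X_mulA_apply, ← Fin.ext_iff, ← Prod.ext_iff]

@[simp]
theorem mulA_one (f : A F) : mulA f (X (0, 0)) = f := by
  rw [mulA_comm, one_mulA]

theorem X_mulA_X {b c d : Idx} (h₁ : b.1.val + c.1.val = d.1.val)
    (h₂ : b.2.val + c.2.val = d.2.val) : mulA (X b : A F) (X c) = X d := by
  funext a
  rw [X_mulA_apply, Finset.sum_eq_single c (fun c' _ hc => by simp [X, hc]) (by simp), h₁, h₂]
  simp [X, Prod.ext_iff, Fin.ext_iff, eq_comm]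

theorem mulA_apply_zero (f g : A F) : mulA f g (0, 0) = f (0, 0) * g (0, 0) := by
  have key (b c : Idx) : (b.1.val + c.1.val = 0 ∧ b.2.val + c.2.val = 0) ↔
      b = (0, 0) ∧ c = (0, 0) := by
    simp only [Prod.ext_iff, Fin.ext_iff, Fin.val_zero]
    omega
  simp only [mulA, Fin.val_zero, key]
  simp [ite_and]

@[simp]
theorem d1_smul (r : F) (f : A F) : d1 (r • f) = r • d1 f := by
  funext a
  simp only [d1, Pi.smul_apply, smul_eq_mul]
  split_ifs <;> ring

@[simp]
theorem d2_smul (r : F) (f : A F) : d2 (r • f) = r • d2 f := by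
  funext a
  simp only [d2, Pi.smul_apply, smul_eq_mul]
  split_ifs <;> ring

@[simp]
theorem d1_zero : d1 (0 : A F) = 0 := by
  simpa using d1_smul (0 : F) 0

@[simp]
theorem d2_zero : d2 (0 : A F) = 0 := by
  simpa using d2_smul (0 : F) 0

@[simp]
theorem d1_neg (f : A F) : d1 (-f) = -d1 f := by
  simpa using d1_smul (-1) f

@[simp]
theorem d2_neg (f : A F) : d2 (-f) = -d2 f := by
  simpa using d2_smul (-1) f

theorem d1_d2_comm (f : A F) : d1 (d2 f) = d2 (d1 f) := by
  funext a
  simp only [d1, d2]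
  split_ifs <;> ring

/- For `i = 0` the exponent `i - 1` wraps around to `4`, but the coefficient vanishes. -/
@[simp]
theorem d1_X (i j : Fin 5) : d1 (X (i, j) : A F) = (i.val : F) • X (i - 1, j) := by
  funext ⟨a, c⟩
  fin_cases i <;> fin_cases a <;> simp [d1, X]

@[simp]
theorem d2_X (i j : Fin 5) : d2 (X (i, j) : A F) = (j.val : F) • X (i, j - 1) := by
  funext ⟨a, c⟩
  fin_cases j <;> fin_cases c <;> simp [d2, X]

theorem d1_apply_zero (f : A F) : d1 f (0, 0) = f (1, 0) := by
  simp [d1]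

theorem d2_apply_zero (f : A F) : d2 f (0, 0) = f (0, 1) := by
  simp [d2]

end TruncatedPolynomials

section HamiltonianFields

/-- The Hamiltonian vector field `H(f) = D₁(f) D₂ − D₂(f) D₁` of a truncated polynomial `f`, in
terms of which the powers of `ad 1` are expressed. -/
def ham (f : A F) : W F := (-d2 f, d1 f)

@[simp]
theorem ham_smul (r : F) (f : A F) : ham (r • f) = r • ham f := by
  simp [ham]

@[simp]
theorem divW_smul (r : F) (D : W F) : divW (r • D) = r • divW D := by
  simp [divW]

@[simp]
theorem divW_ham (f : A F) : divW (ham f) = 0 := by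
  simp [divW, ham, d1_d2_comm]

theorem ham_x1 : ham (X (1, 0) : A F) = (0, X (0, 0)) := by
  simp [ham]

theorem ham_x2 : ham (X (0, 1) : A F) = -(X (0, 0), 0) := by
  simp [ham]

theorem brW_smul_left (r : F) (D E : W F) : brW (r • D) E = r • brW D E := by
  simp [brW, Dw, smul_sub]

theorem brW_smul_right (r : F) (D E : W F) : brW D (r • E) = r • brW D E := by
  simp [brW, Dw, smul_sub]

theorem brW_neg_left (D E : W F) : brW (-D) E = -brW D E := by
  simpa using brW_smul_left (-1) D E

theorem brW_D1_ham (g : A F) : brW (X (0, 0), 0) (ham g) = ham (d1 g) := by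
  simp [brW, Dw, ham, d1_d2_comm]

theorem brW_D2_ham (g : A F) : brW (0, X (0, 0)) (ham g) = ham (d2 g) := by
  simp [brW, Dw, ham, d1_d2_comm]

end HamiltonianFields

section Squaring

@[simp]
theorem brM_zero_left (v : Mel F) : brM 0 v = 0 := by
  simp [brM, Dw, divW, brW, smulA]

@[simp]
theorem brM_zero_right (u : Mel F) : brM u 0 = 0 := by
  simp [brM, Dw, divW, brW, smulA]

theorem ιW_smul (r : F) (D : W F) : ιW (r • D) = r • ιW D := by
  simp [ιW]

theorem brM_ιW_ιW (D E : W F) : brM (ιW D) (ιW E) = ιW (brW D E) := by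
  simp [brM, ιW, Dw, divW, brW, smulA]

theorem brM_ιA_ιW (f : A F) (D : W F) :
    brM (ιA f) (ιW D) = ιA ((2 : F) • mulA (divW D) f - Dw D f) := by
  simp [brM, ιA, ιW, Dw, divW, brW, smulA]

theorem brM_oneM_ιA (f : A F) : brM oneM (ιA f) = ιT ((2 : F) • ham f) := by
  simp [brM, oneM, ιA, ιT, Dw, divW, brW, smulA, ham]

theorem brM_oneM_ιW (D : W F) : brM oneM (ιW D) = ιA ((2 : F) • divW D) := by
  simp [brM, oneM, ιA, ιW, Dw, brW, smulA]

theorem brM_oneM_ιT (E : W F) : brM oneM (ιT E) = ιW E := by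
  simp [brM, oneM, ιA, ιW, ιT, Dw, divW, brW, smulA]

theorem iterate_two_brM_oneM_ιA (f : A F) : (brM oneM)^[2] (ιA f) = ιW ((2 : F) • ham f) := by
  simp [brM_oneM_ιA, brM_oneM_ιT]

theorem iterate_three_brM_oneM_ιA (f : A F) : (brM oneM)^[3] (ιA f) = 0 := by
  rw [Function.iterate_succ_apply', iterate_two_brM_oneM_ιA, brM_oneM_ιW]
  simp [ιA]

theorem iterate_three_brM_oneM_ιW (D : W F) :
    (brM oneM)^[3] (ιW D) = ιW ((4 : F) • ham (divW D)) := by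
  rw [Function.iterate_succ_apply, brM_oneM_ιW, iterate_two_brM_oneM_ιA, ham_smul, smul_smul]
  norm_num

theorem iterate_four_brM_oneM_ιA (f : A F) : (brM oneM)^[4] (ιA f) = 0 := by
  rw [Function.iterate_succ_apply', iterate_three_brM_oneM_ιA, brM_zero_right]

theorem iterate_four_brM_oneM_ιW (D : W F) : (brM oneM)^[4] (ιW D) = 0 := by
  rw [Function.iterate_succ_apply, brM_oneM_ιW, iterate_three_brM_oneM_ιA]

theorem melSq_oneM_ιA_ιW [CharP F 5] (f : A F) (D : W F) :
    melSq (brM oneM) (ιA f) (ιW D) = -ιW (brW (ham f) (ham (divW D))) := by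
  have h5 : (5 : F) = 0 := CharP.ofNat_eq_zero F 5
  have hinv : ((Nat.factorial 2 * Nat.factorial 3 : ℕ) : F)⁻¹ = 3 :=
    inv_eq_of_mul_eq_one_right (by simp only [Nat.factorial]; push_cast; linear_combination 7 * h5)
  have hmid : melSq (brM oneM) (ιA f) (ιW D) =
      (3 : F) • brM (ιW ((2 : F) • ham f)) (ιW ((4 : F) • ham (divW D))) := by
    rw [← iterate_two_brM_oneM_ιA, ← iterate_three_brM_oneM_ιW, ← hinv, melSq,
      Finset.sum_eq_single_of_mem 2 (by decide)]
    intro k hk hk2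
    obtain rfl | rfl | rfl : k = 1 ∨ k = 3 ∨ k = 4 := by grind
    · rw [iterate_four_brM_oneM_ιW, brM_zero_right, smul_zero]
    · rw [iterate_three_brM_oneM_ιA, brM_zero_left, smul_zero]
    · rw [iterate_four_brM_oneM_ιA, brM_zero_left, smul_zero]
  have hcoeff : (3 : F) * 2 * 4 = -1 := by linear_combination 5 * h5
  rw [hmid, brM_ιW_ιW, brW_smul_left, brW_smul_right, ιW_smul, ιW_smul, smul_smul, smul_smul,
    hcoeff, neg_one_smul]

theorem melSq_oneM_x1_ιW [CharP F 5] (D : W F) :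
    melSq (brM oneM) (ιA (X (1, 0))) (ιW D) = -ιW (ham (d2 (divW D))) := by
  rw [melSq_oneM_ιA_ιW, ham_x1, brW_D2_ham]

theorem melSq_oneM_x2_ιW [CharP F 5] (D : W F) :
    melSq (brM oneM) (ιA (X (0, 1))) (ιW D) = ιW (ham (d1 (divW D))) := by
  rw [melSq_oneM_ιA_ιW, ham_x2, brW_neg_left, brW_D1_ham]
  simp [ιW]

theorem melSq_oneM_x1_x1x2sqD1 [CharP F 5] :
    melSq (brM (oneM : Mel F)) (ιA (X (1, 0))) (ιW (X (1, 2), 0)) = (2 : F) • DD 0 := by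
  rw [melSq_oneM_x1_ιW]
  simp [divW, ham, DD, wOf, ιW]

theorem melSq_oneM_x1_x2cubeD2 [CharP F 5] :
    melSq (brM (oneM : Mel F)) (ιA (X (1, 0))) (ιW (0, X (0, 3))) = DD 0 := by
  rw [melSq_oneM_x1_ιW]
  have h6 : (3 : F) * 2 = 1 := by linear_combination CharP.ofNat_eq_zero F 5
  simp [divW, ham, DD, wOf, ιW, smul_smul, h6]

theorem melSq_oneM_x2_x1sqx2D2 [CharP F 5] :
    melSq (brM (oneM : Mel F)) (ιA (X (0, 1))) (ιW (0, X (2, 1))) = (2 : F) • DD 1 := by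
  rw [melSq_oneM_x2_ιW]
  simp [divW, ham, DD, wOf, ιW]

theorem melSq_oneM_x2_x1cubeD1 [CharP F 5] :
    melSq (brM (oneM : Mel F)) (ιA (X (0, 1))) (ιW (X (3, 0), 0)) = DD 1 := by
  rw [melSq_oneM_x2_ιW]
  have h6 : (3 : F) * 2 = 1 := by linear_combination CharP.ofNat_eq_zero F 5
  simp [divW, ham, DD, wOf, ιW, smul_smul, h6]

end Squaring

section Grading

theorem ιA_X_mem_Md {d : ℤ} {b : Idx} (h : d = 3 * degA b - 2) : (ιA (X b) : Mel F) ∈ Md d :=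
  Submodule.subset_span (.inl (.inl ⟨b, rfl, h⟩))

theorem ιW_wOf_mem_Md {d : ℤ} {b : Idx} (i : Fin 2) (h : d = 3 * (degA b - 1)) :
    (ιW (wOf i b) : Mel F) ∈ Md d :=
  Submodule.subset_span (.inl (.inr ⟨b, i, rfl, h⟩))

theorem Md_eq_bot {d : ℤ} (hd : d < -3) : (Md d : Submodule F (Mel F)) = ⊥ := by
  have hdeg (b : Idx) : 0 ≤ degA b := by unfold degA; positivity
  rw [Md, Submodule.span_eq_bot]
  rintro m ((⟨b, -, h⟩ | ⟨b, i, -, h⟩) | ⟨b, i, -, h⟩) <;> have := hdeg b <;> omega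

theorem Md_le_Mge {d e : ℤ} (h : d ≤ e) : (Md e : Submodule F (Mel F)) ≤ Mge d :=
  le_iSup₂_of_le e h le_rfl

theorem Mge_le {d : ℤ} {p : Submodule F (Mel F)}
    (hA : ∀ b : Idx, d ≤ 3 * degA b - 2 → ιA (X b) ∈ p)
    (hW : ∀ (b : Idx) (i : Fin 2), d ≤ 3 * (degA b - 1) → ιW (wOf i b) ∈ p)
    (hT : ∀ (b : Idx) (i : Fin 2), d ≤ 3 * (degA b - 1) + 2 → ιT (wOf i b) ∈ p) :
    Mge d ≤ p := by
  refine iSup₂_le fun e he => Submodule.span_le.2 ?_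
  rintro m ((⟨b, rfl, rfl⟩ | ⟨b, i, rfl, rfl⟩) | ⟨b, i, rfl, rfl⟩)
  exacts [hA b he, hW b i he, hT b i he]

/-- The coefficient of `x^c` in the summand `A(2)` of `M`. -/
def coeffA (c : Idx) : Mel F →ₗ[F] F where
  toFun u := u.1 c
  map_add' _ _ := rfl
  map_smul' _ _ := rfl

/-- The pair of coefficients of `x^c D₁` and `x^c D₂` in the summand `W(2)` of `M`. For `c = 0` this
is the projection of `M` onto its lowest graded piece `M₋₃ = ⟨D₁, D₂⟩`. -/
def coeffW (c : Idx) : Mel F →ₗ[F] F × F where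
  toFun u := (u.2.1.1 c, u.2.1.2 c)
  map_add' _ _ := rfl
  map_smul' _ _ := rfl

/-- The pair of coefficients of `x^c D̃₁` and `x^c D̃₂` in the summand `W(2)~` of `M`. -/
def coeffT (c : Idx) : Mel F →ₗ[F] F × F where
  toFun u := (u.2.2.1 c, u.2.2.2 c)
  map_add' _ _ := rfl
  map_smul' _ _ := rfl

theorem X_apply_of_ne {b c : Idx} (h : b ≠ c) : (X b : A F) c = 0 :=
  if_neg h.symm

theorem wOf_apply_of_ne {b c : Idx} (i : Fin 2) (h : b ≠ c) :
    ((wOf i b : W F).1 c, (wOf i b : W F).2 c) = 0 := by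
  unfold wOf
  split_ifs <;> simp [X_apply_of_ne h]

theorem coeffA_eq_zero_of_mem_Mge {d : ℤ} {u : Mel F} (hu : u ∈ Mge d) {c : Idx}
    (hc : 3 * degA c - 2 < d) : coeffA c u = 0 := by
  suffices Mge d ≤ LinearMap.ker (coeffA (F := F) c) from this hu
  refine Mge_le (fun b hb => X_apply_of_ne ?_) (fun _ _ _ => rfl) (fun _ _ _ => rfl)
  rintro rfl
  omega

theorem coeffW_eq_zero_of_mem_Mge {d : ℤ} {u : Mel F} (hu : u ∈ Mge d) {c : Idx}
    (hc : 3 * (degA c - 1) < d) : coeffW c u = 0 := by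
  suffices Mge d ≤ LinearMap.ker (coeffW (F := F) c) from this hu
  refine Mge_le (fun _ _ => rfl) (fun b i hb => wOf_apply_of_ne i ?_) (fun _ _ _ => rfl)
  rintro rfl
  omega

theorem coeffT_eq_zero_of_mem_Mge {d : ℤ} {u : Mel F} (hu : u ∈ Mge d) {c : Idx}
    (hc : 3 * (degA c - 1) + 2 < d) : coeffT c u = 0 := by
  suffices Mge d ≤ LinearMap.ker (coeffT (F := F) c) from this hu
  refine Mge_le (fun _ _ => rfl) (fun _ _ _ => rfl) (fun b i hb => wOf_apply_of_ne i ?_)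
  rintro rfl
  omega

theorem coeffW_zero_brM_eq_zero {u : Mel F} (hu : u ∈ Mge 1) (v : Mel F) :
    coeffW (0, 0) (brM u v) = 0 := by
  have hA : coeffA (0, 0) u = 0 := coeffA_eq_zero_of_mem_Mge hu (by decide)
  have hW₀ : coeffW (0, 0) u = 0 := coeffW_eq_zero_of_mem_Mge hu (by decide)
  have hW₁ : coeffW (1, 0) u = 0 := coeffW_eq_zero_of_mem_Mge hu (by decide)
  have hW₂ : coeffW (0, 1) u = 0 := coeffW_eq_zero_of_mem_Mge hu (by decide)
  have hT : coeffT (0, 0) u = 0 := coeffT_eq_zero_of_mem_Mge hu (by decide)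
  simp only [coeffA, coeffW, coeffT, LinearMap.coe_mk, AddHom.coe_mk, Prod.mk_eq_zero]
    at hA hW₀ hW₁ hW₂ hT ⊢
  simp [brM, brW, Dw, smulA, mulA_apply_zero, d1_apply_zero, d2_apply_zero, hA, hW₀, hW₁, hW₂, hT]

end Grading

section Coboundaries

theorem cob_eq_neg_of_homogeneous {g : Mel F →ₗ[F] Mel F} {k d e : ℤ}
    (hg : ∀ (d : ℤ) (x : Mel F), x ∈ Md d → g x ∈ Md (d - k)) {x y : Mel F} (hx : x ∈ Md d)
    (hy : y ∈ Md e) (hd : d - k < -3) (he : e - k < -3) : cob g x y = -g (brM x y) := by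
  have hgx : g x = 0 := by simpa [Md_eq_bot hd] using hg d x hx
  have hgy : g y = 0 := by simpa [Md_eq_bot he] using hg e y hy
  simp [cob, hgx, hgy]

theorem coeffW_zero_cob (g : Mel F →ₗ[F] Mel F) {x y : Mel F} (hx : x ∈ Mge 1) (hy : y ∈ Mge 1) :
    coeffW (0, 0) (cob g x y) = -coeffW (0, 0) (g (brM x y)) := by
  simp [cob, coeffW_zero_brM_eq_zero hx, coeffW_zero_brM_eq_zero hy]

theorem brM_x1_x1x2sqD1 :
    brM (ιA (X (1, 0)) : Mel F) (ιW (X (1, 2), 0)) = ιA (X (1, 2)) := by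
  have hX : mulA (X (0, 2) : A F) (X (1, 0)) = X (1, 2) := X_mulA_X rfl rfl
  simp [brM_ιA_ιW, Dw, divW, hX, two_smul]

theorem brM_x1_x2cubeD2 [CharP F 5] :
    brM (ιA (X (1, 0)) : Mel F) (ιW (0, X (0, 3))) = ιA (X (1, 2)) := by
  have hX : mulA (X (0, 2) : A F) (X (1, 0)) = X (1, 2) := X_mulA_X rfl rfl
  have h6 : (2 : F) * 3 = 1 := by linear_combination CharP.ofNat_eq_zero F 5
  simp [brM_ιA_ιW, Dw, divW, hX, smul_smul, h6]

theorem brM_x2_x1sqx2D2 :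
    brM (ιA (X (0, 1)) : Mel F) (ιW (0, X (2, 1))) = ιA (X (2, 1)) := by
  have hX : mulA (X (2, 0) : A F) (X (0, 1)) = X (2, 1) := X_mulA_X rfl rfl
  simp [brM_ιA_ιW, Dw, divW, hX, two_smul]

theorem brM_x2_x1cubeD1 [CharP F 5] :
    brM (ιA (X (0, 1)) : Mel F) (ιW (X (3, 0), 0)) = ιA (X (2, 1)) := by
  have hX : mulA (X (2, 0) : A F) (X (0, 1)) = X (2, 1) := X_mulA_X rfl rfl
  have h6 : (2 : F) * 3 = 1 := by linear_combination CharP.ofNat_eq_zero F 5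
  simp [brM_ιA_ιW, Dw, divW, hX, smul_smul, h6]

theorem x1_mem_Md : (ιA (X (1, 0)) : Mel F) ∈ Md 1 := ιA_X_mem_Md (by decide)

theorem x2_mem_Md : (ιA (X (0, 1)) : Mel F) ∈ Md 1 := ιA_X_mem_Md (by decide)

theorem x1x2sqD1_mem_Md : (ιW (X (1, 2), 0) : Mel F) ∈ Md 6 := ιW_wOf_mem_Md 0 (by decide)

theorem x2cubeD2_mem_Md : (ιW (0, X (0, 3)) : Mel F) ∈ Md 6 := ιW_wOf_mem_Md 1 (by decide)

theorem x1sqx2D2_mem_Md : (ιW (0, X (2, 1)) : Mel F) ∈ Md 6 := ιW_wOf_mem_Md 1 (by decide)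

theorem x1cubeD1_mem_Md : (ιW (X (3, 0), 0) : Mel F) ∈ Md 6 := ιW_wOf_mem_Md 0 (by decide)

theorem not_exists_melSq_oneM_eq_cob [CharP F 5] :
    ¬ ∃ g : Mel F →ₗ[F] Mel F, ∀ x y : Mel F, melSq (brM oneM) x y = cob g x y := by
  rintro ⟨g, hg⟩
  have hD : (2 : F) • coeffW (0, 0) (DD 0 : Mel F) = coeffW (0, 0) (DD 0) :=
    calc (2 : F) • coeffW (0, 0) (DD 0 : Mel F)
      _ = coeffW (0, 0) (cob g (ιA (X (1, 0))) (ιW (X (1, 2), 0))) := by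
        rw [← hg, melSq_oneM_x1_x1x2sqD1, map_smul]
      _ = -coeffW (0, 0) (g (ιA (X (1, 2)))) := by
        rw [coeffW_zero_cob g (Md_le_Mge le_rfl x1_mem_Md)
          (Md_le_Mge (by decide) x1x2sqD1_mem_Md), brM_x1_x1x2sqD1]
      _ = coeffW (0, 0) (cob g (ιA (X (1, 0))) (ιW (0, X (0, 3)))) := by
        rw [coeffW_zero_cob g (Md_le_Mge le_rfl x1_mem_Md)
          (Md_le_Mge (by decide) x2cubeD2_mem_Md), brM_x1_x2cubeD2]
      _ = coeffW (0, 0) (DD 0) := by rw [← hg, melSq_oneM_x1_x2cubeD2]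
  have h : (2 : F) = 1 := by simpa [coeffW, DD, ιW, wOf, X] using hD
  exact one_ne_zero (by linear_combination h : (1 : F) = 0)

end Coboundaries


/-- In the Melikian algebra over a field of characteristic 5, the squaring cocycle of
`ad(1)` satisfies `Sq(1)(x_i, x_ix_j²D_i) = 2D_i` and `Sq(1)(x_i, x_j³D_j) = D_i`
for `i ≠ j`, while every `1`-cochain `g` homogeneous of degree `−10` has coboundary
`dg(x_i, x_ix_j²D_i) = dg(x_i, x_j³D_j) = −g(x_ix_j²)`; hence `[Sq(1)] ≠ 0` in
`H²(M, M)`. -/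
theorem melikian_sq_one_nonzero (F : Type*) [Field F] [CharP F 5] :
    melSq (brM (oneM : Mel F)) (ιA (X (1, 0))) (ιW (X (1, 2), 0)) = (2 : F) • DD 0 ∧
    melSq (brM (oneM : Mel F)) (ιA (X (1, 0))) (ιW (0, X (0, 3))) = DD 0 ∧
    melSq (brM (oneM : Mel F)) (ιA (X (0, 1))) (ιW (0, X (2, 1))) = (2 : F) • DD 1 ∧
    melSq (brM (oneM : Mel F)) (ιA (X (0, 1))) (ιW (X (3, 0), 0)) = DD 1 ∧
    (∀ g : Mel F →ₗ[F] Mel F,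
      (∀ (d : ℤ) (x : Mel F), x ∈ Md d → g x ∈ Md (d - 10)) →
      cob g (ιA (X (1, 0))) (ιW (X (1, 2), 0)) = - g (ιA (X (1, 2))) ∧
      cob g (ιA (X (1, 0))) (ιW (0, X (0, 3))) = - g (ιA (X (1, 2))) ∧
      cob g (ιA (X (0, 1))) (ιW (0, X (2, 1))) = - g (ιA (X (2, 1))) ∧
      cob g (ιA (X (0, 1))) (ιW (X (3, 0), 0)) = - g (ιA (X (2, 1)))) ∧
    ¬ ∃ g : Mel F →ₗ[F] Mel F, ∀ x y : Mel F, melSq (brM oneM) x y = cob g x y := by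
  refine ⟨melSq_oneM_x1_x1x2sqD1, melSq_oneM_x1_x2cubeD2, melSq_oneM_x2_x1sqx2D2,
    melSq_oneM_x2_x1cubeD1, fun g hg => ?_, not_exists_melSq_oneM_eq_cob⟩
  have hcob {x y : Mel F} (hx : x ∈ Md 1) (hy : y ∈ Md 6) : cob g x y = -g (brM x y) :=
    cob_eq_neg_of_homogeneous hg hx hy (by decide) (by decide)
  refine ⟨?_, ?_, ?_, ?_⟩
  · rw [hcob x1_mem_Md x1x2sqD1_mem_Md, brM_x1_x1x2sqD1]
  · rw [hcob x1_mem_Md x2cubeD2_mem_Md, brM_x1_x2cubeD2]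
  · rw [hcob x2_mem_Md x1sqx2D2_mem_Md, brM_x2_x1sqx2D2]
  · rw [hcob x2_mem_Md x1cubeD1_mem_Md, brM_x2_x1cubeD1]

end Melikian
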